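/- The normalization function normE is a valid normalization function for ≈ on Exp: for every t : Exp, normE t ≈ t, and for all t u : Exp, t ≈ u implies normE t = normE u. -/

import Mathlib

/-- Arithmetic expressions. -/
inductive Exp : Type
  | Zero : Exp
  | One : Exp
  | Opp : Exp → Exp
  | Plus : Exp → Exp → Exp
deriving DecidableEq

/-- The smallest equivalence relation on `Exp` compatible with `Opp` and `Plus` such
that `Zero` is neutral for `Plus`. -/
inductive expEq : Exp → Exp → Prop
  | plusZero (t : Exp) : expEq (Exp.Plus t Exp.Zero) t
  | zeroPlus (t : Exp) : expEq (Exp.Plus Exp.Zero t) t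
  | refl (t : Exp) : expEq t t
  | symm {t u : Exp} : expEq t u → expEq u t
  | trans {t u v : Exp} : expEq t u → expEq u v → expEq t v
  | opp {t t' : Exp} : expEq t t' → expEq (Exp.Opp t) (Exp.Opp t')
  | plus {t t' u u' : Exp} : expEq t t' → expEq u u' →
      expEq (Exp.Plus t u) (Exp.Plus t' u')

/-- The construction function for `Plus`. -/
def plusC : Exp → Exp → Exp
  | Exp.Zero, u => u
  | t, Exp.Zero => t
  | t, u => Exp.Plus t u

/-- The normalization function associated to the construction functions. -/
def normE : Exp → Exp
  | Exp.Zero => Exp.Zero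
  | Exp.One => Exp.One
  | Exp.Opp t => Exp.Opp (normE t)
  | Exp.Plus t u => plusC (normE t) (normE u)

theorem zero_plusC (u : Exp) : plusC Exp.Zero u = u :=
  rfl

theorem plusC_zero (t : Exp) : plusC t Exp.Zero = t := by
  cases t <;> rfl

theorem plusC_expEq_plus (t u : Exp) : expEq (plusC t u) (Exp.Plus t u) := by
  fun_cases plusC t u with
  | case1 => exact (expEq.zeroPlus u).symm
  | case2 => exact (expEq.plusZero t).symm
  | case3 => exact expEq.refl (Exp.Plus t u)

theorem normE_expEq (t : Exp) : expEq (normE t) t := by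
  induction t with
  | Zero => exact expEq.refl Exp.Zero
  | One => exact expEq.refl Exp.One
  | Opp t iht => exact expEq.opp iht
  | Plus t u iht ihu => exact (plusC_expEq_plus (normE t) (normE u)).trans (expEq.plus iht ihu)

/-- `normE` interprets `Plus` as `plusC`, for which `Zero` is neutral on the nose, so its kernel is
one of the congruences among which `expEq` is the smallest. -/
theorem expEq.normE_eq {t u : Exp} (h : expEq t u) : normE t = normE u := by
  induction h with
  | plusZero t => exact plusC_zero (normE t)
  | zeroPlus t => exact zero_plusC (normE t)
  | refl t => rfl
  | symm _ ih => exact ih.symm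
  | trans _ _ htu huv => exact htu.trans huv
  | opp _ ih => exact congrArg Exp.Opp ih
  | plus _ _ iht ihu => exact congrArg₂ plusC iht ihu

theorem normE_valid :
    (∀ t, expEq (normE t) t) ∧ (∀ t u, expEq t u → normE t = normE u) :=
  ⟨normE_expEq, fun _ _ => expEq.normE_eq⟩
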